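/- Combinatorial interpretation of partial r-Bell polynomials: for sequences (a_l), (b_l) of nonnegative integers, B^{(r)}_{n+r,k+r}(a_l ; b_l) equals the number of partitions of the set {1, ..., n+r} into k+r blocks such that (i) the elements 1, ..., r lie in distinct blocks, (ii) each block of cardinality i containing none of 1,...,r is assigned one of a_i colors, and (iii) each block of cardinality i containing one of 1,...,r is assigned one of b_i colors. -/

import Mathlib

open Finset

/-- The partial `r`-Bell polynomial `B^{(r)}_{n+r,k+r}(a;b)`, defined by the explicit
formula `(n!/k!) * Σ_{n_1+...+n_{k+r}=n-k} Π_{i=1}^{r} b_{n_i+1}/n_i! *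
Π_{i=r+1}^{r+k} a_{n_i+1}/(n_i+1)!`, the sum over `(k+r)`-tuples of naturals. -/
noncomputable def rBell {A : Type*} [CommRing A] [Algebra ℚ A]
    (r k n : ℕ) (a b : ℕ → A) : A :=
  ((n.factorial : ℚ) / (k.factorial : ℚ)) •
    ∑ f ∈ Finset.Nat.antidiagonalTuple (k + r) (n - k),
      ∏ i : Fin (k + r),
        if (i : ℕ) < r then (((f i).factorial : ℚ))⁻¹ • b (f i + 1)
        else ((((f i) + 1).factorial : ℚ))⁻¹ • a (f i + 1)

/-!
Label the blocks of a partition by `κ ⊕ δ`, where `δ` indexes the marked elements and `κ` has `k`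
elements: the block of a marked element `d` must get the label `inr d`, and the remaining blocks are
labelled by `κ` in `k!` ways. A labelled partition amounts to a function to `κ ⊕ δ`, determined by
its restriction to the `n` unmarked elements, which can be any function attaining every value in
`κ`. The sum over all functions of products of weights of the fiber sizes is `n!` times the `n`-th
coefficient of the product of the exponential generating functions of the weights. A label in `κ`
contributes the series of `a` with `a 0` replaced by `0`, which excludes the empty fiber, and a
label in `δ` the series of the shifted sequence `b`, since its block has one element more than its
fiber. Pulling a factor `X` out of each of the `k` former series gives the shift from `n` to `n - k`
in `rBell`.
-/

open Function PowerSeries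
open scoped Nat

section GeneratingFunctions

variable {R A ι : Type*} [CommRing A] [Algebra ℚ A]

/-- The exponential generating function of a sequence, as a formal power series; the coefficient
ring is a `ℚ`-algebra because of the factorials in the denominators. -/
noncomputable def egf (F : ℕ → A) : A⟦X⟧ :=
  PowerSeries.mk fun l => (l ! : ℚ)⁻¹ • F l

lemma coeff_egf (F : ℕ → A) (l : ℕ) : coeff l (egf F) = (l ! : ℚ)⁻¹ • F l :=
  coeff_mk l _

lemma constantCoeff_egf (F : ℕ → A) : constantCoeff (egf F) = F 0 := by
  simp [← coeff_zero_eq_constantCoeff_apply, coeff_egf]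

lemma derivative_egf (F : ℕ → A) : d⁄dX A (egf F) = egf fun l => F (l + 1) := by
  ext l
  have hl : ((l + 1)! : ℚ)⁻¹ * (l + 1 : ℕ) = (l ! : ℚ)⁻¹ := by
    rw [Nat.factorial_succ]
    push_cast
    field_simp
  rw [coeff_derivative, coeff_egf, coeff_egf, ← hl, mul_smul, Nat.cast_smul_eq_nsmul,
    nsmul_eq_mul, mul_comm, ← mul_smul_comm, Nat.cast_succ]

lemma derivation_prod {S M : Type*} [CommSemiring R] [CommSemiring S] [AddCommMonoid M]
    [Algebra R S] [Module S M] [Module R M] [DecidableEq ι] (D : Derivation R S M) (s : Finset ι)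
    (f : ι → S) : D (∏ i ∈ s, f i) = ∑ i ∈ s, (∏ j ∈ s.erase i, f j) • D (f i) := by
  induction s using Finset.induction_on with
  | empty => simp
  | insert i s hi ih =>
    rw [prod_insert hi, D.leibniz, ih, sum_insert hi, erase_insert hi, smul_sum, add_comm]
    congr 1
    refine sum_congr rfl fun j hj => ?_
    rw [erase_insert_of_ne (by rintro rfl; exact hi hj),
      prod_insert fun h => hi (mem_of_mem_erase h), mul_smul]

lemma derivative_prod_egf [Fintype ι] [DecidableEq ι] (F : ι → ℕ → A) :
    d⁄dX A (∏ j, egf (F j)) =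
      ∑ i, ∏ j, egf fun l => F j (l + if i = j then 1 else 0) := by
  rw [derivation_prod]
  refine sum_congr rfl fun i _ => ?_
  rw [derivative_egf, smul_eq_mul, ← prod_erase_mul _ _ (mem_univ i)]
  congr 1
  · refine prod_congr rfl fun j hj => ?_
    simp [(ne_of_mem_erase hj).symm]
  · simp

lemma card_option_filter {α : Type*} [Fintype α] (p : Option α → Prop) [DecidablePred p] :
    #{x | p x} = #{x | p (some x)} + if p none then 1 else 0 := by
  simp_rw [card_filter]
  rw [Fintype.sum_option, add_comm]

/- Induction on `α`: adding an element to `α` means differentiating the product of the generating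
functions. -/
theorem sum_prod_card_fiber {α : Type*} [Fintype α] [DecidableEq α] [Fintype ι]
    [DecidableEq ι] (F : ι → ℕ → A) :
    ∑ h : α → ι, ∏ j, F j #{x | h x = j} =
      (Fintype.card α)! • coeff (Fintype.card α) (∏ j, egf (F j)) := by
  revert ‹DecidableEq α› F
  refine Fintype.induction_empty_option (P := fun α _ => ∀ [DecidableEq α] (F : ι → ℕ → A),
    ∑ h : α → ι, ∏ j, F j #{x | h x = j} =
      (Fintype.card α)! • coeff (Fintype.card α) (∏ j, egf (F j))) ?of_equiv ?empty ?option α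
  case of_equiv =>
    intro α β _ ψ ih _ F
    classical
    let _ := Fintype.ofEquiv β ψ.symm
    rw [← Fintype.card_congr ψ, ← ih, ← (ψ.arrowCongr (.refl ι)).sum_comp]
    refine sum_congr rfl fun h _ => prod_congr rfl fun j _ => ?_
    exact congrArg (F j) (card_equiv ψ.symm (by simp))
  case empty => simp [constantCoeff_egf]
  case option =>
    intro α _ ih _ F
    classical
    calc ∑ h : Option α → ι, ∏ j, F j #{x | h x = j}
        = ∑ i, ∑ h : α → ι, ∏ j, F j (#{x | h x = j} + if i = j then 1 else 0) := by
          rw [← (Equiv.piOptionEquivProd (β := fun _ => ι)).symm.sum_comp, Fintype.sum_prod_type]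
          simp only [card_option_filter]
          rfl
      _ = (Fintype.card α)! • coeff (Fintype.card α) (d⁄dX A (∏ j, egf (F j))) := by
          rw [derivative_prod_egf, map_sum, smul_sum]
          exact sum_congr rfl fun i _ => ih fun j l => F j (l + if i = j then 1 else 0)
      _ = _ := by
          rw [coeff_derivative, Fintype.card_option, Nat.factorial_succ, nsmul_eq_mul, nsmul_eq_mul]
          push_cast
          ring

lemma X_mul_mk_coeff_succ_egf (F : ℕ → A) :
    X * PowerSeries.mk (fun l => coeff (l + 1) (egf F)) = egf (update F 0 0) := by
  ext l
  cases l with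
  | zero => simp [coeff_egf]
  | succ l => simp [coeff_succ_X_mul, coeff_egf]

lemma coeff_prod_univ_fin [CommSemiring R] {m : ℕ} (f : Fin m → R⟦X⟧) (d : ℕ) :
    coeff d (∏ i, f i) = ∑ l ∈ Finset.Nat.antidiagonalTuple m d, ∏ i, coeff (l i) (f i) := by
  rw [coeff_prod]
  exact sum_equiv Finsupp.equivFunOnFinite
    (by simp [Finset.Nat.mem_antidiagonalTuple]) (by simp)

theorem rBell_eq_coeff {n k : ℕ} (hkn : k ≤ n) (r : ℕ) (a b : ℕ → A) :
    rBell r k n a b = ((n ! : ℚ) / (k ! : ℚ)) •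
      coeff n (egf (update a 0 0) ^ k * egf (fun l => b (l + 1)) ^ r) := by
  let aTail := PowerSeries.mk fun l => coeff (l + 1) (egf a)
  have hprod : ∏ i : Fin (k + r), (if (i : ℕ) < r then egf (fun l => b (l + 1)) else aTail) =
      aTail ^ k * egf (fun l => b (l + 1)) ^ r := by
    rw [Fin.prod_univ_eq_prod_range (fun i => if i < r then egf (fun l => b (l + 1)) else aTail),
      add_comm k r, prod_range_add, prod_ite_of_true (by simp)]
    simp [mul_comm]
  rw [← X_mul_mk_coeff_succ_egf, mul_pow, mul_assoc, ← hprod, coeff_X_pow_mul', if_pos hkn,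
    coeff_prod_univ_fin, rBell]
  congr! 3 with f _ i
  split_ifs <;> simp [aTail, coeff_egf]

end GeneratingFunctions

section FiberPartition

variable {α ι : Type*} [Fintype α] [DecidableEq α]

/-- The block of `P` containing `x`: `Finpartition.part` as an element of the type of blocks, so
that one can speak of bijections from the blocks of `P`. -/
def blockOf (P : Finpartition (univ : Finset α)) (x : α) : P.parts :=
  ⟨P.part x, P.part_mem.2 (mem_univ x)⟩

lemma blockOf_eq_iff_mem {P : Finpartition (univ : Finset α)} {x : α} {B : P.parts} :
    blockOf P x = B ↔ x ∈ B.1 :=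
  Subtype.ext_iff.trans (P.part_eq_iff_mem B.2)

lemma surjective_blockOf (P : Finpartition (univ : Finset α)) : Surjective (blockOf P) := fun B =>
  (P.nonempty_of_mem_parts B.2).imp fun _ hx => blockOf_eq_iff_mem.2 hx

lemma finpartition_ext_part {P Q : Finpartition (univ : Finset α)}
    (h : ∀ x, P.part x = Q.part x) : P = Q := by
  have parts_eq (R : Finpartition (univ : Finset α)) :
      (R.parts : Set (Finset α)) = Set.range R.part := by
    rw [← Set.image_univ, ← coe_univ]
    exact (R.part_surjOn.image_eq_of_mapsTo fun x hx => R.part_mem.2 hx).symm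
  apply Finpartition.ext
  rw [← coe_inj, parts_eq, parts_eq, funext h]

variable [DecidableEq ι]

/-- The partition of `α` into the nonempty fibers of `g`, by which a labelled partition is
recovered from its labelling function. -/
def fiberPartition (g : α → ι) : Finpartition (univ : Finset α) :=
  haveI : DecidableRel (Setoid.ker g).r := fun x y => decEq (g x) (g y)
  Finpartition.ofSetoid (Setoid.ker g)

lemma part_fiberPartition (g : α → ι) (x : α) :
    (fiberPartition g).part x = ({y | g y = g x} : Finset α) := by
  ext y
  rw [fiberPartition, Finpartition.mem_part_ofSetoid_iff_rel, Setoid.ker_def, mem_filter_univ,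
    eq_comm]

lemma fiber_mem_fiberPartition {g : α → ι} (hg : Surjective g) (j : ι) :
    ({x | g x = j} : Finset α) ∈ (fiberPartition g).parts := by
  obtain ⟨x, rfl⟩ := hg j
  simp [← part_fiberPartition]

/-- The bijection from labels to blocks for a surjective labelling `g`, sending a label to its
fiber. -/
noncomputable def fiberEquiv {g : α → ι} (hg : Surjective g) : ι ≃ (fiberPartition g).parts :=
  Equiv.ofBijective (fun j => ⟨({x | g x = j} : Finset α), fiber_mem_fiberPartition hg j⟩) <| by
    constructor
    · intro j j' h
      obtain ⟨x, rfl⟩ := hg j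
      simpa using Finset.ext_iff.1 (congrArg Subtype.val h) x
    · intro B
      obtain ⟨x, rfl⟩ := surjective_blockOf _ B
      exact ⟨g x, Subtype.ext (part_fiberPartition g x).symm⟩

lemma fiberEquiv_apply {g : α → ι} (hg : Surjective g) (x : α) :
    fiberEquiv hg (g x) = blockOf (fiberPartition g) x :=
  Subtype.ext (part_fiberPartition g x).symm

lemma fiberEquiv_symm_blockOf {g : α → ι} (hg : Surjective g) (x : α) :
    (fiberEquiv hg).symm (blockOf (fiberPartition g) x) = g x := by
  rw [Equiv.symm_apply_eq, fiberEquiv_apply]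

lemma prod_parts_fiberPartition [Fintype ι] {M : Type*} [CommMonoid M] {g : α → ι}
    (hg : Surjective g) (w : Finset α → M) :
    ∏ B ∈ (fiberPartition g).parts, w B = ∏ j, w {x | g x = j} := by
  rw [← prod_coe_sort]
  exact ((fiberEquiv hg).prod_comp fun B => w B).symm

lemma card_parts_fiberPartition [Fintype ι] {g : α → ι} (hg : Surjective g) :
    #(fiberPartition g).parts = Fintype.card ι := by
  rw [← Fintype.card_coe, Fintype.card_congr (fiberEquiv hg)]

lemma fiberPartition_comp_blockOf (P : Finpartition (univ : Finset α)) (σ : P.parts ≃ ι) :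
    fiberPartition (fun x => σ (blockOf P x)) = P := by
  refine finpartition_ext_part fun x => ?_
  rw [part_fiberPartition]
  ext y
  rw [mem_filter_univ, σ.apply_eq_iff_eq, blockOf_eq_iff_mem]
  rfl

end FiberPartition

lemma prod_update_zero {ι R : Type*} [Fintype ι] [CommSemiring R] (a : ℕ → R) (c : ι → ℕ) :
    ∏ i, update a 0 0 (c i) = if ∀ i, c i ≠ 0 then ∏ i, a (c i) else 0 := by
  classical
  simp_rw [update_apply, ← ite_not (c _ = 0), prod_ite_zero, mem_univ, true_imp_iff]

lemma card_equiv_extending {δ X Y : Type*} [Fintype δ] [Fintype X] [Fintype Y] [DecidableEq X]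
    [DecidableEq Y] (hcard : Fintype.card X = Fintype.card Y)
    {u : δ → X} {v : δ → Y} (hu : Injective u) (hv : Injective v) :
    Fintype.card {σ : X ≃ Y // ∀ d, σ (u d) = v d} = (Fintype.card Y - Fintype.card δ)! := by
  classical
  let e₀ : Set.range u ≃ Set.range v := (Equiv.ofInjective u hu).symm.trans (Equiv.ofInjective v hv)
  have extends_iff (σ : X ≃ Y) : (∀ d, σ (u d) = v d) ↔ ∀ x : Set.range u, σ x = e₀ x := by
    rw [Set.forall_subtype_range_iff]
    simp [e₀]
  have card_compl_u : Fintype.card ↥(Set.range u)ᶜ = Fintype.card Y - Fintype.card δ := by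
    rw [Fintype.card_compl_set, Set.card_range_of_injective hu, hcard]
  have card_compl_v : Fintype.card ↥(Set.range v)ᶜ = Fintype.card Y - Fintype.card δ := by
    rw [Fintype.card_compl_set, Set.card_range_of_injective hv]
  rw [Fintype.card_congr ((Equiv.subtypeEquivRight extends_iff).trans (Equiv.Set.compl e₀)),
    Fintype.card_equiv (Fintype.equivOfCardEq (card_compl_u.trans card_compl_v.symm)), card_compl_u]

section Labellings

variable {α β κ δ : Type*}

/-- `g` labels the blocks of its fiber partition bijectively by `κ ⊕ δ`, where the block of the
marked element `e d` has the label `inr d`. -/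
structure IsLabelling (e : δ → α) (g : α → κ ⊕ δ) : Prop where
  surjective : Surjective g
  map_marked : ∀ d, g (e d) = .inr d

section Partitions

variable [Fintype α] [DecidableEq α] [DecidableEq κ] [DecidableEq δ] {e : δ → α}

lemma IsLabelling.injective_blockOf {g : α → κ ⊕ δ} (hg : IsLabelling e g) :
    Injective fun d => blockOf (fiberPartition g) (e d) := by
  intro d d' h
  simpa [← fiberEquiv_apply hg.surjective, hg.map_marked] using h

variable [Fintype κ] [Fintype δ]

open Classical in
lemma card_labellings {P : Finpartition (univ : Finset α)}
    (hcard : #P.parts = Fintype.card κ + Fintype.card δ)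
    (he : Injective fun d => blockOf P (e d)) :
    #{g : α → κ ⊕ δ | IsLabelling e g ∧ fiberPartition g = P} = (Fintype.card κ)! := by
  have card_extending := card_equiv_extending (Y := κ ⊕ δ) (by simpa using hcard) he
    Sum.inr_injective
  rw [Fintype.card_sum, Nat.add_sub_cancel] at card_extending
  rw [← card_extending, ← card_univ]
  symm
  refine card_bij (fun σ _ x => σ.1 (blockOf P x)) ?_ ?_ ?_
  · rintro ⟨σ, hσ⟩ -
    exact (mem_filter_univ _).2
      ⟨⟨σ.surjective.comp (surjective_blockOf P), hσ⟩, fiberPartition_comp_blockOf P σ⟩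
  · rintro ⟨σ, hσ⟩ - ⟨τ, hτ⟩ - h
    exact Subtype.ext (Equiv.coe_fn_injective ((surjective_blockOf P).injective_comp_right h))
  · intro g hg
    obtain ⟨hlab, rfl⟩ := (mem_filter_univ _).1 hg
    have hσ := fiberEquiv_symm_blockOf hlab.surjective
    exact ⟨⟨(fiberEquiv hlab.surjective).symm, fun d => (hσ (e d)).trans (hlab.map_marked d)⟩,
      mem_univ _, funext hσ⟩

open Classical in
theorem sum_labellings {R : Type*} [CommSemiring R] (e : δ → α) (w : Finset α → R) :
    ∑ g : α → κ ⊕ δ with IsLabelling e g, ∏ j, w {x | g x = j} =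
      (Fintype.card κ)! • ∑ P : Finpartition (univ : Finset α) with
          #P.parts = Fintype.card κ + Fintype.card δ ∧ Injective fun d => blockOf P (e d),
        ∏ B ∈ P.parts, w B := by
  rw [← sum_fiberwise_of_maps_to (g := fiberPartition), smul_sum]
  · refine sum_congr rfl fun P hP => ?_
    obtain ⟨hcard, he⟩ := (mem_filter_univ _).1 hP
    rw [filter_filter, ← card_labellings hcard he]
    refine sum_eq_card_nsmul fun g hg => ?_
    obtain ⟨hlab, rfl⟩ := (mem_filter_univ _).1 hg
    exact (prod_parts_fiberPartition hlab.surjective w).symm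
  · intro g hg
    have hg := (mem_filter_univ _).1 hg
    exact (mem_filter_univ _).2
      ⟨by rw [card_parts_fiberPartition hg.surjective, Fintype.card_sum], hg.injective_blockOf⟩

end Partitions

/-- Extends a labelling `h` of the unmarked elements `β` to all of `α` (identified by `ψ` with the
disjoint union of unmarked and marked elements) by giving the marked element `d` the label
`inr d`. -/
def extendByMarks (ψ : β ⊕ δ ≃ α) (h : β → κ ⊕ δ) : α → κ ⊕ δ :=
  Sum.elim h .inr ∘ ψ.symm

lemma isLabelling_extendByMarks {ψ : β ⊕ δ ≃ α} {h : β → κ ⊕ δ} :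
    IsLabelling (ψ ∘ .inr) (extendByMarks ψ h) ↔ ∀ i, ∃ y, h y = .inl i := by
  constructor
  · intro hg i
    obtain ⟨x, hx⟩ := hg.surjective (.inl i)
    obtain ⟨y | d, rfl⟩ := ψ.surjective x
    · exact ⟨y, by simpa [extendByMarks] using hx⟩
    · simp [extendByMarks] at hx
  · intro hh
    refine ⟨?_, fun d => by simp [extendByMarks]⟩
    rintro (i | d)
    · obtain ⟨y, hy⟩ := hh i
      exact ⟨ψ (.inl y), by simpa [extendByMarks] using hy⟩
    · exact ⟨ψ (.inr d), by simp [extendByMarks]⟩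

lemma IsLabelling.extendByMarks_restrict {ψ : β ⊕ δ ≃ α} {g : α → κ ⊕ δ}
    (hg : IsLabelling (ψ ∘ .inr) g) : extendByMarks ψ (g ∘ ψ ∘ .inl) = g := by
  funext x
  obtain ⟨y | d, rfl⟩ := ψ.surjective x
  · simp [extendByMarks]
  · simpa [extendByMarks] using (hg.map_marked d).symm

variable [Fintype α] [Fintype β] [DecidableEq κ] [Fintype δ]

lemma card_fiber_extendByMarks [DecidableEq δ] (ψ : β ⊕ δ ≃ α) (h : β → κ ⊕ δ) (j : κ ⊕ δ) :
    #{x | extendByMarks ψ h x = j} = #{y | h y = j} + #{d : δ | .inr d = j} := by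
  simp only [card_filter]
  rw [← ψ.sum_comp, Fintype.sum_sum_type]
  simp [extendByMarks]

variable [DecidableEq α] [Fintype κ]

open Classical in
lemma sum_labellings_eq_sum_extendByMarks [DecidableEq β] [DecidableEq δ] {M : Type*}
    [AddCommMonoid M] (ψ : β ⊕ δ ≃ α) (Φ : (α → κ ⊕ δ) → M) :
    ∑ g with IsLabelling (ψ ∘ .inr) g, Φ g =
      ∑ h : β → κ ⊕ δ with ∀ i, ∃ y, h y = .inl i, Φ (extendByMarks ψ h) := by
  symm
  refine sum_nbij' (extendByMarks ψ) (fun g => g ∘ ψ ∘ .inl) ?_ ?_ ?_ ?_ ?_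
  · simp [isLabelling_extendByMarks]
  · intro g hg
    have hg := (mem_filter_univ _).1 hg
    rw [mem_filter_univ, ← isLabelling_extendByMarks (ψ := ψ), hg.extendByMarks_restrict]
    exact hg
  · intro h _
    funext y
    simp [extendByMarks]
  · intro g hg
    exact ((mem_filter_univ _).1 hg).extendByMarks_restrict
  · simp

variable {A : Type*} [CommRing A] [Algebra ℚ A]

open Classical in
theorem sum_labellings_eq_coeff [DecidableEq δ] (ψ : β ⊕ δ ≃ α) (a b : ℕ → A) :
    ∑ g : α → κ ⊕ δ with IsLabelling (ψ ∘ .inr) g,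
        (∏ i, a #{x | g x = .inl i}) * ∏ d, b #{x | g x = .inr d} =
      (Fintype.card β)! • coeff (Fintype.card β)
        (egf (update a 0 0) ^ Fintype.card κ * egf (fun l => b (l + 1)) ^ Fintype.card δ) := by
  have sum_fibers := sum_prod_card_fiber (α := β)
    (Sum.elim (fun _ : κ => update a 0 0) fun (_ : δ) l => b (l + 1))
  simp only [Fintype.prod_sum_type, Sum.elim_inl, Sum.elim_inr, prod_const, card_univ] at sum_fibers
  rw [sum_labellings_eq_sum_extendByMarks, ← sum_fibers, sum_filter]
  refine sum_congr rfl fun h _ => ?_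
  have nonempty_iff : (∀ i, ∃ y, h y = .inl i) ↔ ∀ i, #{y | h y = .inl i} ≠ 0 := by
    simp [filter_eq_empty_iff]
  simp [card_fiber_extendByMarks, prod_update_zero, nonempty_iff, filter_eq']

open Classical in
theorem factorial_smul_sum_partitions (k : ℕ) (ψ : β ⊕ δ ≃ α) (a b : ℕ → A) :
    k ! • ∑ P : Finpartition (univ : Finset α) with
          #P.parts = k + Fintype.card δ ∧ Injective fun d => blockOf P (ψ (.inr d)),
        ∏ B ∈ P.parts, (if ∃ d, ψ (.inr d) ∈ B then b #B else a #B) =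
      (Fintype.card β)! • coeff (Fintype.card β)
        (egf (update a 0 0) ^ k * egf (fun l => b (l + 1)) ^ Fintype.card δ) := by
  have hsum := sum_labellings (κ := Fin k) (ψ ∘ .inr)
    fun B => if ∃ d, ψ (.inr d) ∈ B then b #B else a #B
  have hcoeff := sum_labellings_eq_coeff (κ := Fin k) ψ a b
  rw [Fintype.card_fin] at hsum hcoeff
  rw [← hcoeff]
  refine hsum.symm.trans (sum_congr rfl fun g hg => ?_)
  have hmarked := ((mem_filter_univ _).1 hg).map_marked
  simp only [comp_apply] at hmarked
  simp [Fintype.prod_sum_type, hmarked]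

end Labellings

section Fin

/-- Splits `Fin (n + r)` into `n` unmarked and `r` marked elements, the marked ones being the
*first* `r` elements, as in the definition of `r`-Bell partitions. -/
def finSumEquiv (n r : ℕ) : Fin n ⊕ Fin r ≃ Fin (n + r) :=
  (Equiv.sumComm _ _).trans (finSumFinEquiv.trans (finCongr (add_comm r n)))

lemma exists_finSumEquiv_inr_mem_iff {n r : ℕ} {B : Finset (Fin (n + r))} :
    (∃ d, finSumEquiv n r (.inr d) ∈ B) ↔ ∃ i ∈ B, (i : ℕ) < r := by
  constructor
  · rintro ⟨d, hd⟩
    exact ⟨_, hd, by simp [finSumEquiv]⟩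
  · rintro ⟨i, hi, hir⟩
    exact ⟨⟨i, hir⟩, by convert! hi⟩

lemma injective_blockOf_iff {n r : ℕ} {P : Finpartition (univ : Finset (Fin (n + r)))} :
    (Injective fun d => blockOf P (finSumEquiv n r (.inr d))) ↔
      ∀ i j : Fin (n + r), (i : ℕ) < r → (j : ℕ) < r →
        ∀ B ∈ P.parts, i ∈ B → j ∈ B → i = j := by
  constructor
  · intro h i j hi hj B hB hiB hjB
    have hblock : blockOf P i = blockOf P j :=
      ((blockOf_eq_iff_mem (B := ⟨B, hB⟩)).2 hiB).trans (blockOf_eq_iff_mem.2 hjB).symm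
    have hmark : (⟨i, hi⟩ : Fin r) = ⟨j, hj⟩ := h hblock
    exact Fin.ext (Fin.mk.inj hmark)
  · intro h d d' hdd'
    have hmark := h _ _ (by simp [finSumEquiv]) (by simp [finSumEquiv]) _ (blockOf P _).2
      (blockOf_eq_iff_mem.1 hdd') (blockOf_eq_iff_mem.1 rfl)
    simpa using hmark

end Fin

theorem rBell_count_general {A : Type*} [CommRing A] [Algebra ℚ A] (n k r : ℕ) (hkn : k ≤ n)
    (a b : ℕ → A) :
    rBell r k n a b =
      ∑ P : {P : Finpartition (Finset.univ : Finset (Fin (n + r))) //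
          P.parts.card = k + r ∧
          ∀ i j : Fin (n + r), (i : ℕ) < r → (j : ℕ) < r →
            ∀ B ∈ P.parts, i ∈ B → j ∈ B → i = j},
        ∏ B ∈ P.1.parts, if ∃ i ∈ B, (i : ℕ) < r then b B.card else a B.card := by
  have hpart := factorial_smul_sum_partitions k (finSumEquiv n r) a b
  simp only [Fintype.card_fin, injective_blockOf_iff, exists_finSumEquiv_inr_mem_iff] at hpart
  have hk : (k ! : ℚ) ≠ 0 := by positivity
  rw [rBell_eq_coeff hkn, div_eq_inv_mul, mul_smul, inv_smul_eq_iff₀ hk, Nat.cast_smul_eq_nsmul,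
    Nat.cast_smul_eq_nsmul, ← hpart, ← sum_subtype_eq_sum_filter, subtype_univ]

lemma natCard_sigma_pi_fin {ι β : Type*} [Fintype ι] (s : ι → Finset β) (c : β → ℕ) :
    Nat.card (Σ i, ∀ x : {x // x ∈ s i}, Fin (c x)) = ∑ i, ∏ x ∈ s i, c x := by
  simp [Nat.card_sigma, Nat.card_pi, prod_attach _ c]

/-- Combinatorial interpretation: `B^{(r)}_{n+r,k+r}(a;b)` counts colored partitions of
`{1,…,n+r}` into `k+r` blocks with the first `r` elements in distinct blocks, where a
block of size `i` gets one of `a i` colors if it misses the first `r` elements and one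
of `b i` colors otherwise. -/
theorem rBell_count (n k r : ℕ) (hkn : k ≤ n) (a b : ℕ → ℕ) :
    rBell r k n (fun l => (a l : ℚ)) (fun l => (b l : ℚ)) =
      (Nat.card
        (Σ P : {P : Finpartition (Finset.univ : Finset (Fin (n + r))) //
            P.parts.card = k + r ∧
            ∀ i j : Fin (n + r), (i : ℕ) < r → (j : ℕ) < r →
              ∀ B ∈ P.parts, i ∈ B → j ∈ B → i = j},
          ∀ B : {B : Finset (Fin (n + r)) // B ∈ P.1.parts},
            Fin (if ∃ i ∈ B.1, (i : ℕ) < r then b B.1.card else a B.1.card)) : ℚ) := by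
  rw [rBell_count_general n k r hkn]
  refine .trans ?_ (congrArg Nat.cast (natCard_sigma_pi_fin _
    fun B : Finset (Fin (n + r)) => if ∃ i ∈ B, (i : ℕ) < r then b #B else a #B).symm)
  push_cast
  rfl
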